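/- Let (X,τ) be a topological space and 𝒫 a primal on X such that τ is suitable for 𝒫. Then a subset A of X is τ⋄-closed (i.e., A⋄ ⊆ A) if and only if A can be expressed as A = F ∪ B, where F is closed in (X,τ) and Bᶜ ∉ 𝒫. -/

import Mathlib

open Set

/-- A collection `P` of subsets of `X` is a *primal* on `X`. -/
structure IsSetPrimal {X : Type*} (P : Set (Set X)) : Prop where
  univ_not_mem : Set.univ ∉ P
  mem_of_subset : ∀ {A B : Set X}, A ∈ P → B ⊆ A → B ∈ P
  mem_or_mem_of_inter_mem : ∀ {A B : Set X}, A ∩ B ∈ P → A ∈ P ∨ B ∈ P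

/-- The primal-diamond operator: `A⋄ = {x | ∀ open U ∋ x, Aᶜ ∪ Uᶜ ∈ P}`. -/
def primalDiamond {X : Type*} [TopologicalSpace X] (P : Set (Set X)) (A : Set X) : Set X :=
  {x | ∀ U : Set X, IsOpen U → x ∈ U → Aᶜ ∪ Uᶜ ∈ P}

/-- The `Ψ` operator: `Ψ(A) = {x | ∃ open U ∋ x, (U \ A)ᶜ ∉ P}`. -/
def primalPsi {X : Type*} [TopologicalSpace X] (P : Set (Set X)) (A : Set X) : Set X :=
  {x | ∃ U : Set X, IsOpen U ∧ x ∈ U ∧ (U \ A)ᶜ ∉ P}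

/-- The topology is *suitable* for the primal `P` if `Aᶜ ∪ A⋄ ∉ P` for all `A`. -/
def SuitableForPrimal {X : Type*} [TopologicalSpace X] (P : Set (Set X)) : Prop :=
  ∀ A : Set X, Aᶜ ∪ primalDiamond P A ∉ P

theorem IsSetPrimal.isLowerSet {X : Type*} {P : Set (Set X)} (hP : IsSetPrimal P) :
    IsLowerSet P :=
  fun _ _ hBA hA => hP.mem_of_subset hA hBA

section PrimalDiamond

variable {X : Type*} [TopologicalSpace X] {P : Set (Set X)}

theorem isClosed_primalDiamond (P : Set (Set X)) (A : Set X) : IsClosed (primalDiamond P A) := by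
  rw [← isOpen_compl_iff, isOpen_iff_forall_mem_open]
  intro x hx
  obtain ⟨U, hU, hxU, hAU⟩ : ∃ U, IsOpen U ∧ x ∈ U ∧ Aᶜ ∪ Uᶜ ∉ P := by
    simpa [primalDiamond] using hx
  exact ⟨U, fun y hyU hy => hAU (hy U hU hyU), hU, hxU⟩

theorem primalDiamond_union_subset_of_isClosed (hP : IsLowerSet P) {F B : Set X}
    (hF : IsClosed F) (hB : Bᶜ ∉ P) : primalDiamond P (F ∪ B) ⊆ F := by
  intro x hx
  by_contra hxF
  have hmem : (F ∪ B)ᶜ ∪ Fᶜᶜ ∈ P := hx Fᶜ hF.isOpen_compl hxF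
  have hsub : Bᶜ ⊆ (F ∪ B)ᶜ ∪ Fᶜᶜ := by grind
  exact hB (hP hsub hmem)

theorem stmt_18_general (hP : IsLowerSet P) {A : Set X} (hA : Aᶜ ∪ primalDiamond P A ∉ P) :
    primalDiamond P A ⊆ A ↔ ∃ F B : Set X, IsClosed F ∧ Bᶜ ∉ P ∧ A = F ∪ B := by
  constructor
  · intro hsub
    have hdiff : (A \ primalDiamond P A)ᶜ ∉ P := by
      rwa [Set.compl_sdiff, union_comm]
    exact ⟨primalDiamond P A, A \ primalDiamond P A, isClosed_primalDiamond P A, hdiff,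
      (union_sdiff_cancel hsub).symm⟩
  · rintro ⟨F, B, hF, hB, rfl⟩
    exact (primalDiamond_union_subset_of_isClosed hP hF hB).trans subset_union_left

end PrimalDiamond

theorem stmt_18 {X : Type*} [TopologicalSpace X] (P : Set (Set X)) (hP : IsSetPrimal P)
    (hs : SuitableForPrimal P) (A : Set X) :
    primalDiamond P A ⊆ A ↔
      ∃ F B : Set X, IsClosed F ∧ Bᶜ ∉ P ∧ A = F ∪ B :=
  stmt_18_general hP.isLowerSet (hs A)
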